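/- arXiv:2301.08580 — 6 statements merged into one kernel-verified Lean document; each statement's English description precedes it below -/
import Mathlib

section
/- Let κ > -1 and ρ > -1 be real, let m, n be nonnegative integers, and let z, w ∈ ℂ with z ∉ (-∞,0] and 1 - z·w ∉ (-∞,0]. Then the Rodrigues-type expression equals the explicit finite sum: (-1)^m · z^{-ρ} · (1-zw)^{-κ} · D^m[u ↦ u^n · u^ρ · (1-uw)^{κ+m}](z) = Z^{κ,ρ}_{m,n}(z,w), where D^m denotes the m-th complex derivative in the variable u (with w held fixed). -/
open Complex Finset

/-- The fractional Zernike function `Z^{κ,ρ}_{m,n}(z,w)`, viewed as a function of two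
independent complex variables. -/
noncomputable def fracZernike (κ ρ : ℝ) (m n : ℕ) (z w : ℂ) : ℂ :=
  ∑ j ∈ Finset.range (m + 1),
    ((-1 : ℂ) ^ j * (Nat.factorial m : ℂ) * Complex.Gamma ((n : ℂ) + ρ + 1) *
        Complex.Gamma ((κ : ℂ) + m + 1) /
      ((Nat.factorial j : ℂ) * (Nat.factorial (m - j) : ℂ) *
        Complex.Gamma ((n : ℂ) + ρ - j + 1) * Complex.Gamma ((κ : ℂ) + j + 1))) *
    (1 - z * w) ^ j * z ^ ((n : ℤ) - (j : ℤ)) * w ^ (m - j)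

/-!
The Leibniz rule expands the `m`-th derivative of `u ^ (n + ρ) * (1 - u * w) ^ (κ + m)` into powers
of `z` and `1 - z * w` weighted by falling factorials of `n + ρ` and `κ + m`. The prefactor removes
the non-integer parts of the exponents, and the recurrence of the entire function `1 / Γ` turns the
falling factorials into the Gamma quotients of `fracZernike`.
-/

/-- The identity persists at the poles of `Γ`: there `Γ` has the value `0` in Mathlib, so that its
inverse is the entire function `1 / Γ` everywhere. -/
lemma inv_Gamma_sub_natCast_add_one (a : ℂ) (k : ℕ) :
    (Gamma (a - k + 1))⁻¹ = (descPochhammer ℂ k).eval a * (Gamma (a + 1))⁻¹ := by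
  induction k with
  | zero => simp
  | succ k ih =>
    have shift : a - (k + 1 : ℕ) + 1 = a - k := by push_cast; ring
    rw [shift, one_div_Gamma_eq_self_mul_one_div_Gamma_add_one, ih, descPochhammer_succ_eval]
    ring

lemma Gamma_div_Gamma_sub_natCast {a : ℂ} (ha : Gamma (a + 1) ≠ 0) (k : ℕ) :
    Gamma (a + 1) / Gamma (a - k + 1) = (descPochhammer ℂ k).eval a := by
  rw [div_eq_mul_inv, inv_Gamma_sub_natCast_add_one, mul_left_comm, mul_inv_cancel₀ ha, mul_one]

lemma iteratedDeriv_cpow_const_of_hasDerivAt_const {f : ℂ → ℂ} {c : ℂ}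
    (hf : ∀ u, HasDerivAt f c u) (a : ℂ) (k : ℕ) {z : ℂ} (hz : f z ∈ slitPlane) :
    iteratedDeriv k (fun u ↦ f u ^ a) z
      = c ^ k * (descPochhammer ℂ k).eval a * f z ^ (a - k) := by
  induction k generalizing z with
  | zero => simp
  | succ k ih =>
    have eventually_ih : iteratedDeriv k (fun u ↦ f u ^ a) =ᶠ[nhds z]
        fun u ↦ c ^ k * (descPochhammer ℂ k).eval a * f u ^ (a - k) :=
      ((hf z).continuousAt.eventually_mem (isOpen_slitPlane.mem_nhds hz)).mono fun _ ↦ ih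
    have exponent : a - (k + 1 : ℕ) = a - k - 1 := by push_cast; ring
    rw [iteratedDeriv_succ, eventually_ih.deriv_eq,
      (((hf z).cpow_const hz).const_mul _).deriv, descPochhammer_succ_eval, exponent]
    ring

lemma iteratedDeriv_cpow_mul_one_sub_mul_cpow (a b w : ℂ) (m : ℕ) {z : ℂ}
    (hz : z ∈ slitPlane) (hzw : 1 - z * w ∈ slitPlane) :
    iteratedDeriv m (fun u ↦ u ^ a * (1 - u * w) ^ b) z
      = ∑ j ∈ range (m + 1), m.choose j * ((descPochhammer ℂ j).eval a * z ^ (a - j)) *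
          ((-w) ^ (m - j) * (descPochhammer ℂ (m - j)).eval b *
            (1 - z * w) ^ (b - (m - j : ℕ))) := by
  have left_analytic : AnalyticAt ℂ (fun u : ℂ ↦ u ^ a) z :=
    analyticAt_id.cpow analyticAt_const hz
  have right_analytic : AnalyticAt ℂ (fun u : ℂ ↦ (1 - u * w) ^ b) z :=
    AnalyticAt.cpow (by fun_prop) analyticAt_const hzw
  have right_hasDerivAt (u : ℂ) : HasDerivAt (fun u ↦ 1 - u * w) (-w) u := by
    simpa using ((hasDerivAt_id u).mul_const w).const_sub 1
  rw [iteratedDeriv_fun_mul left_analytic.contDiffAt right_analytic.contDiffAt]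
  refine sum_congr rfl fun j _ ↦ ?_
  rw [iteratedDeriv_cpow_const_of_hasDerivAt_const hasDerivAt_id' a j hz,
    iteratedDeriv_cpow_const_of_hasDerivAt_const right_hasDerivAt b (m - j) hzw, one_pow, one_mul]

theorem rodrigues_eq_sum_descPochhammer (κ ρ : ℂ) (m n : ℕ) {z w : ℂ}
    (hz : z ∈ slitPlane) (hzw : 1 - z * w ∈ slitPlane) :
    (-1) ^ m * z ^ (-ρ) * (1 - z * w) ^ (-κ) *
      iteratedDeriv m (fun u ↦ u ^ n * u ^ ρ * (1 - u * w) ^ (κ + m)) z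
    = ∑ j ∈ range (m + 1), (-1) ^ j * m.choose j * (descPochhammer ℂ j).eval (n + ρ) *
        (descPochhammer ℂ (m - j)).eval (κ + m) *
        (1 - z * w) ^ j * z ^ ((n : ℤ) - (j : ℤ)) * w ^ (m - j) := by
  have hz₀ : z ≠ 0 := slitPlane_ne_zero hz
  have merge_powers : (fun u ↦ u ^ n * u ^ ρ * (1 - u * w) ^ (κ + m)) =ᶠ[nhds z]
      fun u ↦ u ^ (n + ρ) * (1 - u * w) ^ (κ + m) := by
    filter_upwards [isOpen_ne.mem_nhds hz₀] with u hu
    rw [cpow_add _ _ hu, cpow_natCast]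
  rw [merge_powers.iteratedDeriv_eq, iteratedDeriv_cpow_mul_one_sub_mul_cpow _ _ _ _ hz hzw,
    mul_sum]
  refine sum_congr rfl fun j hj ↦ ?_
  obtain ⟨k, rfl⟩ := Nat.exists_eq_add_of_le (mem_range_succ_iff.mp hj)
  rw [Nat.add_sub_cancel_left]
  have z_power : z ^ (-ρ) * z ^ (n + ρ - j) = z ^ ((n : ℤ) - (j : ℤ)) := by
    rw [← cpow_add _ _ hz₀, ← cpow_intCast]
    congr 1
    push_cast
    ring
  have one_sub_power :
      (1 - z * w) ^ (-κ) * (1 - z * w) ^ (κ + (j + k : ℕ) - k) = (1 - z * w) ^ j := by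
    rw [← cpow_add _ _ (slitPlane_ne_zero hzw), ← cpow_natCast]
    congr 1
    push_cast
    ring
  have sign : (-1) ^ (j + k) * (-w) ^ k = (-1) ^ j * w ^ k := by
    rw [pow_add, mul_assoc, ← mul_pow, neg_one_mul, neg_neg]
  rw [← z_power, ← one_sub_power]
  linear_combination (z ^ (-ρ) * z ^ (n + ρ - j) *
    ((1 - z * w) ^ (-κ) * (1 - z * w) ^ (κ + (j + k : ℕ) - k)) * (j + k).choose j *
    (descPochhammer ℂ j).eval (n + ρ) * (descPochhammer ℂ k).eval (κ + (j + k : ℕ))) * sign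

lemma fracZernike_eq_sum_descPochhammer (κ ρ : ℝ) (m n : ℕ) (z w : ℂ)
    (hκ : ∀ k : ℕ, κ + m + 1 ≠ -k) (hρ : ∀ k : ℕ, n + ρ + 1 ≠ -k) :
    fracZernike κ ρ m n z w
      = ∑ j ∈ range (m + 1), (-1) ^ j * m.choose j * (descPochhammer ℂ j).eval (n + ρ : ℂ) *
          (descPochhammer ℂ (m - j)).eval (κ + m : ℂ) *
          (1 - z * w) ^ j * z ^ ((n : ℤ) - (j : ℤ)) * w ^ (m - j) := by
  have Gamma_κ_ne_zero : Gamma ((κ : ℂ) + m + 1) ≠ 0 :=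
    Gamma_ne_zero fun k ↦ mod_cast hκ k
  have Gamma_ρ_ne_zero : Gamma ((n : ℂ) + ρ + 1) ≠ 0 :=
    Gamma_ne_zero fun k ↦ mod_cast hρ k
  refine sum_congr rfl fun j hj ↦ ?_
  have hjm : j ≤ m := mem_range_succ_iff.mp hj
  have shift : (κ : ℂ) + m - (m - j : ℕ) = κ + j := by push_cast [hjm]; ring
  rw [Nat.cast_choose ℂ hjm, ← Gamma_div_Gamma_sub_natCast Gamma_ρ_ne_zero,
    ← Gamma_div_Gamma_sub_natCast Gamma_κ_ne_zero, shift]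
  ring

lemma mem_slitPlane_of_not_nonpos {z : ℂ} (hz : ¬(z.re ≤ 0 ∧ z.im = 0)) : z ∈ slitPlane := by
  simpa [mem_slitPlane_iff, or_iff_not_imp_left] using hz

lemma natCast_add_add_one_ne_neg_natCast {x : ℝ} (hx : -1 < x) (n k : ℕ) : n + x + 1 ≠ -k := by
  have : (0 : ℝ) ≤ n := n.cast_nonneg
  have : (0 : ℝ) ≤ k := k.cast_nonneg
  linarith

theorem rodrigues_fracZernike_general (κ ρ : ℝ) (m n : ℕ) {z w : ℂ}
    (hκ : ∀ k : ℕ, κ + m + 1 ≠ -k) (hρ : ∀ k : ℕ, n + ρ + 1 ≠ -k)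
    (hz : z ∈ slitPlane) (hzw : 1 - z * w ∈ slitPlane) :
    (-1 : ℂ) ^ m * z ^ (-(ρ : ℂ)) * (1 - z * w) ^ (-(κ : ℂ)) *
      iteratedDeriv m (fun u : ℂ ↦ u ^ n * u ^ (ρ : ℂ) * (1 - u * w) ^ ((κ : ℂ) + m)) z
    = fracZernike κ ρ m n z w := by
  rw [rodrigues_eq_sum_descPochhammer κ ρ m n hz hzw,
    fracZernike_eq_sum_descPochhammer κ ρ m n z w hκ hρ]

/-- Rodrigues type formula for the fractional Zernike functions. -/
theorem rodrigues_fracZernike (κ ρ : ℝ) (hκ : -1 < κ) (hρ : -1 < ρ) (m n : ℕ) (z w : ℂ)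
    (hz : ¬(z.re ≤ 0 ∧ z.im = 0)) (h1 : ¬((1 - z * w).re ≤ 0 ∧ (1 - z * w).im = 0)) :
    (-1 : ℂ) ^ m * z ^ (-(ρ : ℂ)) * (1 - z * w) ^ (-(κ : ℂ)) *
      iteratedDeriv m (fun u : ℂ => u ^ n * u ^ (ρ : ℂ) * (1 - u * w) ^ ((κ : ℂ) + m)) z
    = fracZernike κ ρ m n z w :=
  rodrigues_fracZernike_general κ ρ m n
    (fun k ↦ add_comm κ m ▸ natCast_add_add_one_ne_neg_natCast hκ m k)
    (natCast_add_add_one_ne_neg_natCast hρ n)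
    (mem_slitPlane_of_not_nonpos hz) (mem_slitPlane_of_not_nonpos h1)
end

section
/- Let κ > -1 and ρ > -1 be real, let m, n be nonnegative integers. For every z ∈ ℂ with z ≠ 0 and every w ∈ ℂ, the fractional Zernike function has the terminating Gauss hypergeometric representation Z^{κ,ρ}_{m,n}(z,w) = (κ+1)_m · z^{n-m} · Σ_{j=0}^{m} [((-m)_j (n+κ+ρ+1)_j) / ((κ+1)_j · j!)] · (1-zw)^j, i.e. Z^{κ,ρ}_{m,n}(z,w) = (κ+1)_m z^{n-m} ₂F₁(-m, n+κ+ρ+1; κ+1; 1-zw), where z^{n-m} is an integer power. -/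
open Complex Finset

/-- The rising factorial (Pochhammer symbol) `(x)_j`. -/
noncomputable def poch (x : ℂ) (j : ℕ) : ℂ := (ascPochhammer ℂ j).eval x

/-!
After factoring out `z ^ (n - m)`, the quotients of Gamma functions are Pochhammer symbols and
`fracZernike` is a polynomial in `x = z * w - 1`, written in the basis `x ^ j * (1 + x) ^ (m - j)`.
Re-expanding `(1 + x) ^ (m - j)` in powers of `x`, the coefficient of `x ^ k` is a
Chu-Vandermonde sum, which collapses to `(n + κ + ρ + 1)_k`: this is Pfaff's transformation of a
terminating `₂F₁`.
-/

section CommSemiring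

variable {R : Type*} [CommSemiring R]

lemma ascPochhammer_eval_split (x : R) {i j m : ℕ} (hij : i ≤ j) (hjm : j ≤ m) :
    (ascPochhammer R (m - i)).eval (x + i) =
      (ascPochhammer R (j - i)).eval (x + i) * (ascPochhammer R (m - j)).eval (x + j) := by
  obtain ⟨d, rfl⟩ := Nat.exists_eq_add_of_le hij
  obtain ⟨e, rfl⟩ := Nat.exists_eq_add_of_le hjm
  rw [Nat.add_sub_cancel_left, Nat.add_sub_cancel_left, add_assoc i, Nat.add_sub_cancel_left,
    ← ascPochhammer_mul]
  simp [Polynomial.eval_comp, add_assoc]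

lemma pow_mul_one_add_pow (x : R) {j m : ℕ} (hj : j ≤ m) :
    x ^ j * (1 + x) ^ (m - j) =
      ∑ k ∈ Ico j (m + 1), ((m - j).choose (k - j) : R) * x ^ k := by
  rw [sum_Ico_eq_sum_range, Nat.succ_sub hj, add_comm 1 x, add_pow, mul_sum]
  refine sum_congr rfl fun i _ ↦ ?_
  rw [Nat.add_sub_cancel_left, pow_add, one_pow]
  ring

end CommSemiring

section CommRing

variable {R : Type*} [CommRing R]

lemma descPochhammer_eval_add (r s : R) (k : ℕ) :
    (descPochhammer R k).eval (r + s) =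
      ∑ ij ∈ antidiagonal k, (k.choose ij.1 : R) *
        ((descPochhammer R ij.1).eval r * (descPochhammer R ij.2).eval s) := by
  have smeval_eq_eval (j : ℕ) (x : R) :
      (descPochhammer ℤ j).smeval x = (descPochhammer R j).eval x := by
    rw [Polynomial.descPochhammer_smeval_eq_ascPochhammer, Polynomial.ascPochhammer_smeval_eq_eval,
      descPochhammer_eval_eq_ascPochhammer]
  simpa only [smeval_eq_eval] using Ring.descPochhammer_smeval_add k (Commute.all r s)

lemma sum_choose_mul_descPochhammer_mul_ascPochhammer (a b : R) (k : ℕ) :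
    ∑ j ∈ range (k + 1), (k.choose j : R) * (descPochhammer R j).eval a *
        (ascPochhammer R (k - j)).eval (b + j) =
      (ascPochhammer R k).eval (a + b) := by
  have ascPochhammer_eq {j : ℕ} (hj : j ≤ k) :
      (ascPochhammer R (k - j)).eval (b + j) = (descPochhammer R (k - j)).eval (b + k - 1) := by
    rw [descPochhammer_eval_eq_ascPochhammer, Nat.cast_sub hj]
    ring_nf
  calc
    _ = ∑ j ∈ range (k + 1), (k.choose j : R) *
          ((descPochhammer R j).eval a * (descPochhammer R (k - j)).eval (b + k - 1)) :=
      sum_congr rfl fun j hj ↦ by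
        rw [ascPochhammer_eq (Nat.lt_succ_iff.mp (mem_range.mp hj)), mul_assoc]
    _ = (descPochhammer R k).eval (a + (b + k - 1)) := by
      rw [descPochhammer_eval_add, Nat.sum_antidiagonal_eq_sum_range_succ_mk]
    _ = _ := by
      rw [descPochhammer_eval_eq_ascPochhammer]
      ring_nf

/-- The denominator-free form, multiplied through by `(b)_m`, of
`(1 + x) ^ m * ₂F₁(-m, -a; b; x / (1 + x)) = ₂F₁(-m, a + b; b; -x)`. -/
theorem pfaff_transformation (a b x : R) (m : ℕ) :
    ∑ j ∈ range (m + 1), (m.choose j : R) * (descPochhammer R j).eval a *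
        (ascPochhammer R (m - j)).eval (b + j) * (x ^ j * (1 + x) ^ (m - j)) =
      ∑ k ∈ range (m + 1), (m.choose k : R) * (ascPochhammer R k).eval (a + b) *
        (ascPochhammer R (m - k)).eval (b + k) * x ^ k := by
  have coeff_eq {j k : ℕ} (hjk : j ≤ k) (hkm : k ≤ m) :
      (m.choose j : R) * (ascPochhammer R (m - j)).eval (b + j) * ((m - j).choose (k - j) : R) =
        (m.choose k : R) * (ascPochhammer R (m - k)).eval (b + k) *
          ((k.choose j : R) * (ascPochhammer R (k - j)).eval (b + j)) := by
    have choose_mul : (m.choose k : R) * (k.choose j : R) =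
        (m.choose j : R) * ((m - j).choose (k - j) : R) := by
      rw [← Nat.cast_mul, ← Nat.cast_mul, Nat.choose_mul hjk]
    rw [ascPochhammer_eval_split b hjk hkm]
    linear_combination -(ascPochhammer R (k - j)).eval (b + j) *
      (ascPochhammer R (m - k)).eval (b + k) * choose_mul
  calc
    _ = ∑ j ∈ range (m + 1), ∑ k ∈ Ico j (m + 1), (m.choose j : R) *
          (descPochhammer R j).eval a * (ascPochhammer R (m - j)).eval (b + j) *
          (((m - j).choose (k - j) : R) * x ^ k) :=
      sum_congr rfl fun j hj ↦ by
        rw [pow_mul_one_add_pow x (Nat.lt_succ_iff.mp (mem_range.mp hj)), mul_sum]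
    _ = ∑ k ∈ range (m + 1), ∑ j ∈ range (k + 1), (m.choose j : R) *
          (descPochhammer R j).eval a * (ascPochhammer R (m - j)).eval (b + j) *
          (((m - j).choose (k - j) : R) * x ^ k) :=
      sum_comm' fun j k ↦ by simp only [mem_range, mem_Ico]; lia
    _ = _ := sum_congr rfl fun k hk ↦ by
      rw [← sum_choose_mul_descPochhammer_mul_ascPochhammer, mul_sum, sum_mul, sum_mul]
      refine sum_congr rfl fun j hj ↦ ?_
      have hjk : j ≤ k := Nat.lt_succ_iff.mp (mem_range.mp hj)
      have hkm : k ≤ m := Nat.lt_succ_iff.mp (mem_range.mp hk)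
      linear_combination (descPochhammer R j).eval a * x ^ k * coeff_eq hjk hkm

lemma ascPochhammer_eval_neg_natCast (m j : ℕ) :
    (ascPochhammer R j).eval (-(m : R)) = (-1) ^ j * ((m.choose j : R) * (j.factorial : R)) := by
  rw [ascPochhammer_eval_neg_eq_descPochhammer, descPochhammer_eval_eq_descFactorial,
    Nat.descFactorial_eq_factorial_mul_choose, Nat.cast_mul, mul_comm (j.factorial : R)]

end CommRing

lemma ascPochhammer_eval_mul_hypergeometric_coeff {K : Type*} [Field K] [CharZero K] (b c : K)
    {j m : ℕ} (hj : j ≤ m) (hb : (ascPochhammer K j).eval b ≠ 0) :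
    (ascPochhammer K m).eval b * ((ascPochhammer K j).eval (-(m : K)) *
        (ascPochhammer K j).eval c / ((ascPochhammer K j).eval b * (j.factorial : K))) =
      (-1) ^ j * ((m.choose j : K) * (ascPochhammer K j).eval c *
        (ascPochhammer K (m - j)).eval (b + j)) := by
  have hfactorial : (j.factorial : K) ≠ 0 := Nat.cast_ne_zero.mpr j.factorial_ne_zero
  have hsplit : (ascPochhammer K m).eval b =
      (ascPochhammer K j).eval b * (ascPochhammer K (m - j)).eval (b + j) := by
    simpa only [Nat.sub_zero, Nat.cast_zero, add_zero] using
      ascPochhammer_eval_split b j.zero_le hj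
  rw [ascPochhammer_eval_neg_natCast, hsplit]
  field_simp

-- At a pole of the denominator both sides vanish, since there `Gamma` has the value `0`.
lemma Gamma_add_one_div_Gamma_sub_add_one (a : ℂ) (ha : ∀ k : ℕ, a + 1 ≠ -k) (j : ℕ) :
    Gamma (a + 1) / Gamma (a - j + 1) = (descPochhammer ℂ j).eval a := by
  induction j with
  | zero => simp [Gamma_ne_zero ha]
  | succ j ih =>
    have shift : a - (j + 1 : ℕ) + 1 = a - j := by push_cast; ring
    rw [descPochhammer_succ_eval, ← ih, shift, div_eq_mul_inv,
      one_div_Gamma_eq_self_mul_one_div_Gamma_add_one]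
    ring

lemma Gamma_add_natCast_add_one_div (κ : ℂ) (hκ : ∀ k : ℕ, κ + 1 ≠ -k) {j m : ℕ} (hj : j ≤ m) :
    Gamma (κ + m + 1) / Gamma (κ + j + 1) = (ascPochhammer ℂ (m - j)).eval (κ + 1 + j) := by
  have not_pole (k : ℕ) : κ + 1 + j ≠ -k := fun h ↦
    hκ (j + k) (by push_cast; linear_combination h)
  rw [← Gamma_add_nat_div_Gamma_eq _ not_pole, Nat.cast_sub hj]
  ring_nf

/-- The fractional Zernike function `Z^{κ,ρ}_{m,n}(z,w)` with complex parameters `κ` and `ρ`, the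
setting in which the hypergeometric representation is proved. -/
noncomputable def complexFracZernike (κ ρ : ℂ) (m n : ℕ) (z w : ℂ) : ℂ :=
  ∑ j ∈ range (m + 1),
    ((-1) ^ j * (m.factorial : ℂ) * Gamma (n + ρ + 1) * Gamma (κ + m + 1) /
      ((j.factorial : ℂ) * ((m - j).factorial : ℂ) * Gamma (n + ρ - j + 1) *
        Gamma (κ + j + 1))) *
    (1 - z * w) ^ j * z ^ ((n : ℤ) - (j : ℤ)) * w ^ (m - j)

lemma fracZernike_eq_complexFracZernike (κ ρ : ℝ) (m n : ℕ) (z w : ℂ) :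
    fracZernike κ ρ m n z w = complexFracZernike κ ρ m n z w :=
  rfl

lemma fracZernike_coeff_eq {κ a : ℂ} (hκ : ∀ k : ℕ, κ + 1 ≠ -k) (ha : ∀ k : ℕ, a + 1 ≠ -k)
    {j m : ℕ} (hj : j ≤ m) :
    (-1) ^ j * (m.factorial : ℂ) * Gamma (a + 1) * Gamma (κ + m + 1) /
        ((j.factorial : ℂ) * ((m - j).factorial : ℂ) * Gamma (a - j + 1) * Gamma (κ + j + 1)) =
      (-1) ^ j * ((m.choose j : ℂ) * (descPochhammer ℂ j).eval a *
        (ascPochhammer ℂ (m - j)).eval (κ + 1 + j)) := by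
  rw [Nat.cast_choose ℂ hj, ← Gamma_add_one_div_Gamma_sub_add_one a ha j,
    ← Gamma_add_natCast_add_one_div κ hκ hj]
  ring

lemma complexFracZernike_eq_zpow_mul_sum {κ ρ : ℂ} {m n : ℕ} (hκ : ∀ k : ℕ, κ + 1 ≠ -k)
    (hρ : ∀ k : ℕ, n + ρ + 1 ≠ -k) {z : ℂ} (hz : z ≠ 0) (w : ℂ) :
    complexFracZernike κ ρ m n z w =
      z ^ ((n : ℤ) - (m : ℤ)) *
        ∑ j ∈ range (m + 1), (m.choose j : ℂ) * (descPochhammer ℂ j).eval (n + ρ) *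
          (ascPochhammer ℂ (m - j)).eval (κ + 1 + j) *
          ((z * w - 1) ^ j * (1 + (z * w - 1)) ^ (m - j)) := by
  rw [complexFracZernike, mul_sum]
  refine sum_congr rfl fun j hj ↦ ?_
  have hjm : j ≤ m := Nat.lt_succ_iff.mp (mem_range.mp hj)
  have zpow_split : z ^ ((n : ℤ) - (j : ℤ)) = z ^ ((n : ℤ) - (m : ℤ)) * z ^ (m - j) := by
    rw [← zpow_natCast z (m - j), ← zpow_add₀ hz, Nat.cast_sub hjm, sub_add_sub_cancel]
  rw [fracZernike_coeff_eq hκ hρ hjm, zpow_split, add_sub_cancel, mul_pow,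
    ← neg_sub 1 (z * w), neg_pow (1 - z * w)]
  ring

theorem fracZernike_hypergeometric_general (κ ρ : ℂ) (m n : ℕ) (hκ : ∀ k : ℕ, κ + 1 ≠ -k)
    (hρ : ∀ k : ℕ, n + ρ + 1 ≠ -k) (z : ℂ) (hz : z ≠ 0) (w : ℂ) :
    complexFracZernike κ ρ m n z w =
      poch (κ + 1) m * z ^ ((n : ℤ) - (m : ℤ)) *
        ∑ j ∈ range (m + 1), poch (-(m : ℂ)) j * poch (n + κ + ρ + 1) j /
          (poch (κ + 1) j * (j.factorial : ℂ)) * (1 - z * w) ^ j := by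
  have poch_ne_zero (j : ℕ) : poch (κ + 1) j ≠ 0 := fun h ↦ by
    obtain ⟨k, -, hk⟩ := (ascPochhammer_eval_eq_zero_iff j _).mp h
    exact hκ k (by rw [hk, neg_neg])
  rw [complexFracZernike_eq_zpow_mul_sum hκ hρ hz, pfaff_transformation, mul_comm (poch _ _),
    mul_assoc, mul_sum _ _ (poch _ _)]
  congr 1
  refine sum_congr rfl fun j hj ↦ ?_
  have hjm : j ≤ m := Nat.lt_succ_iff.mp (mem_range.mp hj)
  have parameter_eq : (n : ℂ) + ρ + (κ + 1) = n + κ + ρ + 1 := by ring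
  have coeff_eq : poch (κ + 1) m * (poch (-(m : ℂ)) j * poch (n + κ + ρ + 1) j /
      (poch (κ + 1) j * (j.factorial : ℂ))) =
        (-1) ^ j * ((m.choose j : ℂ) * (ascPochhammer ℂ j).eval (n + κ + ρ + 1) *
          (ascPochhammer ℂ (m - j)).eval (κ + 1 + j)) :=
    ascPochhammer_eval_mul_hypergeometric_coeff (κ + 1) (n + κ + ρ + 1) hjm (poch_ne_zero j)
  rw [← mul_assoc, coeff_eq, parameter_eq, ← neg_sub 1 (z * w), neg_pow (1 - z * w)]
  ring

lemma natCast_add_ofReal_add_one_ne_neg_natCast {x : ℝ} (hx : -1 < x) (n k : ℕ) :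
    (n : ℂ) + x + 1 ≠ -k := by
  have ne_real : (n : ℝ) + x + 1 ≠ -k := fun h ↦ by
    linarith [n.cast_nonneg (α := ℝ), k.cast_nonneg (α := ℝ)]
  exact_mod_cast ne_real

/-- Terminating Gauss hypergeometric representation of the fractional Zernike functions:
`Z^{κ,ρ}_{m,n}(z,w) = (κ+1)_m z^{n-m} ₂F₁(-m, n+κ+ρ+1; κ+1; 1-zw)`. -/
theorem fracZernike_hypergeometric (κ ρ : ℝ) (hκ : -1 < κ) (hρ : -1 < ρ) (m n : ℕ)
    (z : ℂ) (hz : z ≠ 0) (w : ℂ) :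
    fracZernike κ ρ m n z w
      = poch ((κ : ℂ) + 1) m * z ^ ((n : ℤ) - (m : ℤ)) *
          ∑ j ∈ Finset.range (m + 1),
            poch (-(m : ℂ)) j * poch ((n : ℂ) + κ + ρ + 1) j /
              (poch ((κ : ℂ) + 1) j * (Nat.factorial j : ℂ)) * (1 - z * w) ^ j := by
  rw [fracZernike_eq_complexFracZernike]
  exact fracZernike_hypergeometric_general κ ρ m n
    (by simpa using natCast_add_ofReal_add_one_ne_neg_natCast hκ 0)
    (natCast_add_ofReal_add_one_ne_neg_natCast hρ n) z hz w
end

section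
/- Let κ > -1 and let ρ > -1 be real and not an integer, and let m, n be nonnegative integers. Then for every z ∈ ℂ with z ≠ 0 and every w ∈ ℂ, the fractional Zernike function is the following finite combination of classical complex Zernike (disc) polynomials: Z^{κ,ρ}_{m,n}(z,w) = (m! Γ(ρ+1) / (κ+m+1)_n) · Σ_{j=0}^{m} [(-1)^j / (j! (m-j)! Γ(ρ-j+1))] · ((1-zw)/z)^j · 𝒵^{κ+j}_{m-j,n}(z,w). -/
/-!
In `Z^{κ,ρ}_{m,n}` the parameter `ρ` enters only through the generalised binomial coefficients
`(n+ρ choose k) = Γ(n+ρ+1) / (k! Γ(n+ρ-k+1))`, and multiplication by `(-(1-zw)/z)^j` carries the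
remaining factors for `(κ+j, m-j)` to those for `(κ, m)`, with index raised by `j`. The
identity is therefore the Chu–Vandermonde formula
`(n+ρ choose k) = ∑_{i+j=k} (ρ choose j) (n choose i)`. The last parameter `n` and the sum
`κ+m` do not change under `(κ, m) ↦ (κ+j, m-j)`, so all the disc polynomials involved carry the
same normalising factor `(κ+m+1)_n`.
-/

open Complex Finset

/-- The classical complex Zernike (disc) polynomial `𝒵^γ_{m,n}(z,w) = (γ+m+1)_n Z^{γ,0}_{m,n}(z,w)`. -/
noncomputable def discZernike (γ : ℝ) (m n : ℕ) (z w : ℂ) : ℂ :=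
  poch ((γ : ℂ) + m + 1) n * fracZernike γ 0 m n z w

/- `Gamma` takes the value `0` at its poles, so with `0⁻¹ = 0` the expression `(Gamma s)⁻¹` is the
entire function `1/Γ`. -/
theorem inv_Gamma_eq_ascPochhammer_mul_inv_Gamma_add (s : ℂ) (n : ℕ) :
    (Gamma s)⁻¹ = (ascPochhammer ℂ n).eval s * (Gamma (s + n))⁻¹ := by
  induction n with
  | zero => simp
  | succ n ih =>
    have hstep := one_div_Gamma_eq_self_mul_one_div_Gamma_add_one (s + n)
    rw [ih, hstep, ascPochhammer_succ_eval, Nat.cast_succ, add_assoc s, mul_assoc]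

theorem ringChoose_eq_Gamma_div {x : ℂ} (hx : ∀ k : ℕ, x + 1 ≠ -k) (j : ℕ) :
    Ring.choose x j = Gamma (x + 1) / (j.factorial * Gamma (x - j + 1)) := by
  have hinv := inv_Gamma_eq_ascPochhammer_mul_inv_Gamma_add (x - j + 1) j
  have hshift : x - j + 1 + j = x + 1 := by ring
  rw [hshift] at hinv
  rw [Ring.choose_eq_smul, Polynomial.descPochhammer_smeval_eq_ascPochhammer,
    Polynomial.ascPochhammer_smeval_eq_eval, div_eq_mul_inv, mul_inv, hinv, smul_eq_mul]
  field [Gamma_ne_zero hx]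

theorem sum_range_ringChoose_add_mul {R : Type*} [Ring R] [BinomialRing R] {x y : R}
    (hxy : Commute x y) (f : ℕ → R) (m : ℕ) :
    ∑ k ∈ range (m + 1), Ring.choose (x + y) k * f k =
      ∑ j ∈ range (m + 1), Ring.choose x j *
        ∑ i ∈ range (m - j + 1), Ring.choose y i * f (j + i) := by
  calc ∑ k ∈ range (m + 1), Ring.choose (x + y) k * f k
      = ∑ k ∈ range (m + 1), ∑ j ∈ range (k + 1),
          Ring.choose x j * (Ring.choose y (k - j) * f (j + (k - j))) := by
        refine sum_congr rfl fun k _ ↦ ?_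
        rw [Ring.add_choose_eq k hxy, Nat.sum_antidiagonal_eq_sum_range_succ_mk, sum_mul]
        refine sum_congr rfl fun j hj ↦ ?_
        rw [Nat.add_sub_cancel' (mem_range_succ_iff.mp hj), mul_assoc]
    _ = ∑ j ∈ range (m + 1), ∑ i ∈ range (m + 1 - j),
          Ring.choose x j * (Ring.choose y i * f (j + i)) :=
        sum_range_diag_flip (m + 1) fun j i ↦ Ring.choose x j * (Ring.choose y i * f (j + i))
    _ = _ := by
        refine sum_congr rfl fun j hj ↦ ?_
        rw [Nat.sub_add_comm (mem_range_succ_iff.mp hj), mul_sum]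

theorem poch_ne_zero {x : ℂ} (hx : ∀ k : ℕ, x ≠ -k) (n : ℕ) : poch x n ≠ 0 := by
  rw [poch, Ne, ascPochhammer_eval_eq_zero_iff]
  rintro ⟨k, -, hk⟩
  exact hx k (by rw [hk, neg_neg])

/-- The `ρ`-independent factor of the `k`-th term of `Z^{κ,ρ}_{m,n}(z,w)`, i.e. the coefficient of
`m! (n+ρ choose k)`. It is meant for `k ≤ m`, where `m - k` is not truncated. -/
noncomputable def zernikeBasis (κ : ℝ) (m n : ℕ) (z w : ℂ) (k : ℕ) : ℂ :=
  (-1) ^ k * Gamma (κ + m + 1) / ((m - k).factorial * Gamma (κ + k + 1)) *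
    (1 - z * w) ^ k * z ^ ((n : ℤ) - k) * w ^ (m - k)

theorem fracZernike_eq_sum_zernikeBasis (κ : ℝ) {ρ : ℝ} {n : ℕ}
    (hρ : ∀ k : ℕ, (n : ℂ) + ρ + 1 ≠ -k) (m : ℕ) (z w : ℂ) :
    fracZernike κ ρ m n z w =
      m.factorial * ∑ k ∈ range (m + 1), Ring.choose (n + ρ : ℂ) k * zernikeBasis κ m n z w k := by
  rw [fracZernike, mul_sum]
  refine sum_congr rfl fun k _ ↦ ?_
  rw [ringChoose_eq_Gamma_div hρ, zernikeBasis]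
  simp only [div_eq_mul_inv, mul_inv]
  ring

theorem ofReal_add_add_natCast_sub (κ : ℝ) {m j : ℕ} (hj : j ≤ m) :
    ((κ + j : ℝ) : ℂ) + (m - j : ℕ) = κ + m := by
  push_cast [Nat.cast_sub hj]
  ring

theorem zernikeBasis_add (κ : ℝ) {m j : ℕ} (hj : j ≤ m) (n : ℕ) {z : ℂ} (hz : z ≠ 0) (w : ℂ)
    (i : ℕ) :
    zernikeBasis κ m n z w (j + i) =
      (-1) ^ j * ((1 - z * w) / z) ^ j * zernikeBasis (κ + j) (m - j) n z w i := by
  have hindex : ((κ + j : ℝ) : ℂ) + i + 1 = κ + (j + i : ℕ) + 1 := by push_cast; ring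
  have hzpow : z ^ ((n : ℤ) - (j + i : ℕ)) = z ^ ((n : ℤ) - i) / z ^ j := by
    rw [← zpow_natCast z j, ← zpow_sub₀ hz]
    congr 1
    push_cast
    ring
  rw [zernikeBasis, zernikeBasis, ofReal_add_add_natCast_sub κ hj, hindex, hzpow, Nat.sub_sub,
    div_pow]
  ring

theorem discZernike_add_sub (κ : ℝ) {m j : ℕ} (hj : j ≤ m) (n : ℕ) {z : ℂ} (hz : z ≠ 0) (w : ℂ) :
    (-1) ^ j * ((1 - z * w) / z) ^ j * discZernike (κ + j) (m - j) n z w =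
      poch (κ + m + 1) n * ((m - j).factorial *
        ∑ i ∈ range (m - j + 1), Ring.choose (n : ℂ) i * zernikeBasis κ m n z w (j + i)) := by
  have hn : ∀ k : ℕ, (n : ℂ) + (0 : ℝ) + 1 ≠ -k := fun k h ↦ by
    rw [ofReal_zero, add_zero, eq_neg_iff_add_eq_zero] at h
    norm_cast at h
    lia
  simp only [discZernike, ofReal_add_add_natCast_sub κ hj, fracZernike_eq_sum_zernikeBasis _ hn,
    ofReal_zero, add_zero, zernikeBasis_add κ hj n hz, mul_sum]
  exact sum_congr rfl fun i _ ↦ by ring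

theorem fracZernike_eq_comb_discZernike_general (κ ρ : ℝ) (m n : ℕ)
    (hκ : ∀ k : ℕ, κ + m + 1 ≠ -k) (hρ : ∀ k : ℕ, ρ + 1 ≠ -k) (z : ℂ) (hz : z ≠ 0) (w : ℂ) :
    fracZernike κ ρ m n z w
      = (Nat.factorial m : ℂ) * Complex.Gamma ((ρ : ℂ) + 1) / poch ((κ : ℂ) + m + 1) n *
          ∑ j ∈ Finset.range (m + 1),
            (-1 : ℂ) ^ j /
                ((Nat.factorial j : ℂ) * (Nat.factorial (m - j) : ℂ) *
                  Complex.Gamma ((ρ : ℂ) - j + 1)) *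
              ((1 - z * w) / z) ^ j * discZernike (κ + j) (m - j) n z w := by
  have hpoch : poch ((κ : ℂ) + m + 1) n ≠ 0 := poch_ne_zero (fun k ↦ mod_cast hκ k) n
  have hρ' : ∀ k : ℕ, (ρ : ℂ) + 1 ≠ -k := fun k ↦ mod_cast hρ k
  have hnρ : ∀ k : ℕ, (n : ℂ) + ρ + 1 ≠ -k := fun k h ↦
    hρ' (n + k) (by push_cast; linear_combination h)
  rw [fracZernike_eq_sum_zernikeBasis κ hnρ, add_comm (n : ℂ),
    sum_range_ringChoose_add_mul (Commute.all _ _), mul_sum, mul_sum]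
  refine sum_congr rfl fun j hj ↦ ?_
  have hterm := discZernike_add_sub κ (mem_range_succ_iff.mp hj) n hz w
  have hfac : ((m - j).factorial : ℂ) ≠ 0 := mod_cast (m - j).factorial_ne_zero
  simp only [div_mul_eq_mul_div, hterm, ringChoose_eq_Gamma_div hρ']
  field

/-- For non-integer `ρ`, the fractional Zernike function is a finite combination of classical
complex Zernike (disc) polynomials. -/
theorem fracZernike_eq_comb_discZernike (κ ρ : ℝ) (hκ : -1 < κ) (hρ : -1 < ρ)
    (hρint : ∀ k : ℤ, ρ ≠ (k : ℝ)) (m n : ℕ) (z : ℂ) (hz : z ≠ 0) (w : ℂ) :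
    fracZernike κ ρ m n z w
      = (Nat.factorial m : ℂ) * Complex.Gamma ((ρ : ℂ) + 1) / poch ((κ : ℂ) + m + 1) n *
          ∑ j ∈ Finset.range (m + 1),
            (-1 : ℂ) ^ j /
                ((Nat.factorial j : ℂ) * (Nat.factorial (m - j) : ℂ) *
                  Complex.Gamma ((ρ : ℂ) - j + 1)) *
              ((1 - z * w) / z) ^ j * discZernike (κ + j) (m - j) n z w := by
  exact fracZernike_eq_comb_discZernike_general κ ρ m n
    (fun k ↦ by linarith [m.cast_nonneg (α := ℝ), k.cast_nonneg (α := ℝ)])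
    (fun k ↦ by linarith [k.cast_nonneg (α := ℝ)]) z hz w
end

section
/- Let α, β, γ, η be real and m, n nonnegative integers, and set κ := α - 2(γ+m) - 1 and ρ := β - 2η; assume κ > -1 and ρ > -1. On the open set U := {(z,w) ∈ ℂ² : z ≠ 0, w ≠ 0, zw ∉ (-∞,0], 1-zw ∉ (-∞,0]}, define Ψ(z,w) := (zw)^{-η} (1-zw)^{-(γ+m+1)} Z^{κ,ρ}_{m,n}(z,w) with principal-branch powers (this is the two-variable version of the β-restricted Zernike function ψ^{γ,η}_{m,n}). Then, with H₁(t) := (γ+1) + η - η/t and H₂(t) := (γ-α-1) + (η-β) - (η-β)/t, at every point (z,w) ∈ U the following eigenvalue equation for the perturbed magnetic Laplacian holds: -(1-zw)² ∂²Ψ/∂z∂w + (1-zw)·(H₁(zw)·z·∂Ψ/∂z - H₂(zw)·w·∂Ψ/∂w) + H₁(zw)·H₂(zw)·zw·Ψ + (α-γ+1)·Ψ = (m+1)(α-2γ-m)·Ψ, where ∂/∂z and ∂/∂w denote complex partial derivatives in the respective variable with the other held fixed. -/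
open Complex Finset

/-- The two-variable version of the β-restricted Zernike function `ψ^{γ,η}_{m,n}`. -/
noncomputable def psiTwoVar (α β γ η : ℝ) (m n : ℕ) (z w : ℂ) : ℂ :=
  (z * w) ^ (-(η : ℂ)) * (1 - z * w) ^ (-((γ : ℂ) + m + 1)) *
    fracZernike (α - 2 * (γ + m) - 1) (β - 2 * η) m n z w

/-- The potential-type function `H_a^b(t) = a + b - b/t`. -/
noncomputable def Hpot (a b : ℝ) (t : ℂ) : ℂ := (a : ℂ) + b - (b : ℂ) / t

/-!
On `zw, 1 - zw ∉ (-∞, 0]` the function `Ψ` separates as `z ^ n * w ^ m * g (z * w)`, where `g` is a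
combination of the functions `u j t = t ^ (-η - j) * (1 - t) ^ (j - (γ + m + 1))`. With
`θ = t * d/dt`, the operator `z * ∂/∂z` acts on `g` as `θ + n` and `w * ∂/∂w` as `θ + m`, so the
magnetic Laplacian becomes an ordinary differential operator. Up to the eigenvalue, that operator
sends `u j` to a combination of `u j` and `u (j + 1)` only. The terms in the expansion of `g`
therefore cancel in neighbouring pairs: this is the two-term recurrence satisfied by the
coefficients of `Z^{κ,ρ}_{m,n}`.
-/

open scoped Topology

theorem sum_range_mul_eq_zero_of_recurrence {R : Type*} [CommRing R] {m : ℕ} {c p q : ℕ → R}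
    (u : ℕ → R) (hp : p 0 = 0) (hq : q m = 0)
    (hc : ∀ j < m, c (j + 1) * p (j + 1) = -(q j * c j)) :
    ∑ j ∈ range (m + 1), c j * (p j * u j + q j * u (j + 1)) = 0 := by
  simp only [mul_add, sum_add_distrib]
  rw [sum_range_succ', sum_range_succ _ m, hp, hq]
  simp only [zero_mul, mul_zero, add_zero, ← sum_add_distrib]
  refine sum_eq_zero fun j hj => ?_
  linear_combination u (j + 1) * hc j (mem_range.mp hj)

section MagneticLaplacian

/-- The perturbed magnetic Laplacian in two independent variables, with arbitrary functions
`H₁`, `H₂` of `z * w` as potentials. The operator `Δ^{a,b}_{c,d}` of the paper is the case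
`H₁ = H_c^d`, `H₂ = H_a^b`. -/
noncomputable def magneticLaplacian (H₁ H₂ : ℂ → ℂ) (f : ℂ → ℂ → ℂ) (z w : ℂ) : ℂ :=
  -(1 - z * w) ^ 2 * deriv (fun z' => deriv (fun w' => f z' w') w) z
    + (1 - z * w) *
        (H₁ (z * w) * z * deriv (fun z' => f z' w) z
          - H₂ (z * w) * w * deriv (fun w' => f z w') w)
    + H₁ (z * w) * H₂ (z * w) * (z * w) * f z w

/-- The potential `H_a^b` with complex parameters. -/
noncomputable def magneticPotential (a b t : ℂ) : ℂ := a + b - b / t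

theorem magneticLaplacian_congr {H₁ H₂ : ℂ → ℂ} {f g : ℂ → ℂ → ℂ} {z w : ℂ}
    (h : ∀ᶠ p in 𝓝 (z, w), f p.1 p.2 = g p.1 p.2) :
    magneticLaplacian H₁ H₂ f z w = magneticLaplacian H₁ H₂ g z w := by
  have hz : (fun z' => f z' w) =ᶠ[𝓝 z] fun z' => g z' w :=
    h.curry_nhds.mono fun _ hw => hw.self_of_nhds
  have hw : (fun w' => f z w') =ᶠ[𝓝 w] fun w' => g z w' := h.curry_nhds.self_of_nhds
  have hzw : (fun z' => deriv (fun w' => f z' w') w) =ᶠ[𝓝 z]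
      fun z' => deriv (fun w' => g z' w') w :=
    h.curry_nhds.mono fun _ hw => Filter.EventuallyEq.deriv_eq hw
  simp only [magneticLaplacian, hz.deriv_eq, hw.deriv_eq, hzw.deriv_eq, hw.self_of_nhds]

end MagneticLaplacian

section ShiftedEuler

/-- The shifted Euler operator `θ + k`, where `θ = t * d/dt`. -/
noncomputable def shiftedEuler (k : ℂ) (g : ℂ → ℂ) (t : ℂ) : ℂ := t * deriv g t + k * g t

variable {g h : ℂ → ℂ} {k t : ℂ}

theorem shiftedEuler_congr (hgh : g =ᶠ[𝓝 t] h) : shiftedEuler k g t = shiftedEuler k h t := by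
  simp only [shiftedEuler, hgh.deriv_eq, hgh.self_of_nhds]

theorem analyticAt_shiftedEuler (hg : AnalyticAt ℂ g t) : AnalyticAt ℂ (shiftedEuler k g) t :=
  (analyticAt_id.mul hg.deriv).add (analyticAt_const.mul hg)

theorem shiftedEuler_sum {ι : Type*} {s : Finset ι} {c : ι → ℂ} {g : ι → ℂ → ℂ}
    (hg : ∀ i ∈ s, DifferentiableAt ℂ (g i) t) :
    shiftedEuler k (fun t => ∑ i ∈ s, c i * g i t) t = ∑ i ∈ s, c i * shiftedEuler k (g i) t := by
  have hderiv : deriv (fun t => ∑ i ∈ s, c i * g i t) t = ∑ i ∈ s, c i * deriv (g i) t :=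
    (HasDerivAt.fun_sum fun i hi => (hg i hi).hasDerivAt.const_mul (c i)).deriv
  rw [shiftedEuler, hderiv, mul_sum, mul_sum, ← sum_add_distrib]
  exact sum_congr rfl fun i _ => by rw [shiftedEuler]; ring

theorem deriv_zpow_mul_comp_mul {x y : ℂ} (n : ℤ) (hx : x ≠ 0)
    (hg : DifferentiableAt ℂ g (x * y)) :
    deriv (fun x' => x' ^ n * g (x' * y)) x = x ^ (n - 1) * shiftedEuler n g (x * y) := by
  have hcomp : HasDerivAt (fun x' => g (x' * y)) (deriv g (x * y) * y) x :=
    hg.hasDerivAt.comp x (hasDerivAt_mul_const y)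
  rw [((hasDerivAt_zpow n x (Or.inl hx)).fun_mul hcomp).deriv, shiftedEuler, zpow_sub_one₀ hx]
  field_simp
  ring

end ShiftedEuler

section RadialLaplacian

/-- The ordinary differential operator through which the magnetic Laplacian acts on the factor `g`
of `z ^ n * w ^ m * g (z * w)`. -/
noncomputable def radialLaplacian (H₁ H₂ : ℂ → ℂ) (n m : ℂ) (g : ℂ → ℂ) (t : ℂ) : ℂ :=
  -(1 - t) ^ 2 / t * shiftedEuler n (shiftedEuler m g) t
    + (1 - t) * (H₁ t * shiftedEuler n g t - H₂ t * shiftedEuler m g t)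
    + H₁ t * H₂ t * t * g t

theorem magneticLaplacian_zpow_mul_zpow_mul {H₁ H₂ g : ℂ → ℂ} {z w : ℂ} (n m : ℤ) (hz : z ≠ 0)
    (hw : w ≠ 0) (hg : AnalyticAt ℂ g (z * w)) :
    magneticLaplacian H₁ H₂ (fun z w => z ^ n * w ^ m * g (z * w)) z w =
      z ^ n * w ^ m * radialLaplacian H₁ H₂ n m g (z * w) := by
  have deriv_fst : ∀ {h : ℂ → ℂ} (l : ℤ), AnalyticAt ℂ h (z * w) →
      deriv (fun z' => z' ^ n * w ^ l * h (z' * w)) z =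
        z ^ (n - 1) * w ^ l * shiftedEuler n h (z * w) := fun l hh => by
    simp only [mul_right_comm _ (w ^ l), deriv_mul_const_field,
      deriv_zpow_mul_comp_mul n hz hh.differentiableAt]
  have deriv_snd : ∀ z', AnalyticAt ℂ g (z' * w) →
      deriv (fun w' => z' ^ n * w' ^ m * g (z' * w')) w =
        z' ^ n * w ^ (m - 1) * shiftedEuler m g (z' * w) := fun z' hg' => by
    simp only [mul_assoc (z' ^ n), mul_comm z', deriv_const_mul_field] at hg' ⊢
    rw [deriv_zpow_mul_comp_mul m hw hg'.differentiableAt]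
  have analytic_near : ∀ᶠ z' in 𝓝 z, AnalyticAt ℂ g (z' * w) :=
    (continuous_mul_const w).continuousAt.eventually hg.eventually_analyticAt
  have mixed : deriv (fun z' => deriv (fun w' => z' ^ n * w' ^ m * g (z' * w')) w) z =
      z ^ (n - 1) * w ^ (m - 1) * shiftedEuler n (shiftedEuler m g) (z * w) := by
    rw [Filter.EventuallyEq.deriv_eq (analytic_near.mono deriv_snd),
      deriv_fst (m - 1) (analyticAt_shiftedEuler hg)]
  rw [magneticLaplacian, mixed, deriv_fst m hg, deriv_snd z hg, radialLaplacian,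
    zpow_sub_one₀ hz, zpow_sub_one₀ hw]
  field_simp

theorem radialLaplacian_sum {H₁ H₂ : ℂ → ℂ} {n m t : ℂ} {ι : Type*} {s : Finset ι} {c : ι → ℂ}
    {g : ι → ℂ → ℂ} (hg : ∀ i ∈ s, AnalyticAt ℂ (g i) t) :
    radialLaplacian H₁ H₂ n m (fun t => ∑ i ∈ s, c i * g i t) t =
      ∑ i ∈ s, c i * radialLaplacian H₁ H₂ n m (g i) t := by
  have inner : shiftedEuler m (fun t => ∑ i ∈ s, c i * g i t) =ᶠ[𝓝 t]
      fun t => ∑ i ∈ s, c i * shiftedEuler m (g i) t := by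
    filter_upwards [(Filter.eventually_all_finset s).2 fun i hi => (hg i hi).eventually_analyticAt]
      with t' ht' using shiftedEuler_sum fun i hi => (ht' i hi).differentiableAt
  rw [radialLaplacian, shiftedEuler_congr inner, inner.self_of_nhds,
    shiftedEuler_sum fun i hi => (analyticAt_shiftedEuler (hg i hi)).differentiableAt,
    shiftedEuler_sum fun i hi => (hg i hi).differentiableAt]
  simp only [mul_sum, ← sum_sub_distrib, ← sum_add_distrib]
  exact sum_congr rfl fun i _ => by rw [radialLaplacian]; ring

end RadialLaplacian

section JacobiWeight

/-- The function `t ^ a * (1 - t) ^ b`, the weight of the Jacobi polynomials on `(0, 1)`, with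
principal powers. -/
noncomputable def jacobiWeight (a b t : ℂ) : ℂ := t ^ a * (1 - t) ^ b

variable {t : ℂ} (a b : ℂ)

theorem jacobiWeight_add_one_sub_one (ht : t ≠ 0) (ht' : 1 - t ≠ 0) :
    jacobiWeight (a + 1) (b - 1) t = t / (1 - t) * jacobiWeight a b t := by
  rw [jacobiWeight, jacobiWeight, cpow_add _ _ ht, cpow_sub _ _ ht', cpow_one, cpow_one]
  ring

theorem jacobiWeight_sub_add_natCast (ht : t ≠ 0) (ht' : 1 - t ≠ 0) (j : ℕ) :
    jacobiWeight (a - j) (b + j) t = ((1 - t) / t) ^ j * jacobiWeight a b t := by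
  rw [jacobiWeight, jacobiWeight, cpow_sub _ _ ht, cpow_add _ _ ht', cpow_natCast, cpow_natCast,
    div_pow]
  ring

theorem analyticAt_jacobiWeight (ht : t ∈ slitPlane) (ht' : 1 - t ∈ slitPlane) :
    AnalyticAt ℂ (jacobiWeight a b) t :=
  (analyticAt_id.cpow analyticAt_const ht).mul
    ((analyticAt_const.sub analyticAt_id).cpow analyticAt_const ht')

theorem shiftedEuler_jacobiWeight (k : ℂ) (ht : t ∈ slitPlane) (ht' : 1 - t ∈ slitPlane) :
    shiftedEuler k (jacobiWeight a b) t =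
      (a + k) * jacobiWeight a b t - b * jacobiWeight (a + 1) (b - 1) t := by
  have ht₀ : t ≠ 0 := slitPlane_ne_zero ht
  have hderiv : HasDerivAt (jacobiWeight a b)
      (a * t ^ (a - 1) * 1 * (1 - t) ^ b + t ^ a * (b * (1 - t) ^ (b - 1) * -1)) t :=
    ((hasDerivAt_id t).cpow_const ht).mul (((hasDerivAt_id t).const_sub 1).cpow_const ht')
  rw [shiftedEuler, hderiv.deriv]
  simp only [jacobiWeight]
  rw [cpow_sub _ _ ht₀, cpow_add _ _ ht₀, cpow_one]
  field_simp
  ring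

theorem shiftedEuler_shiftedEuler_jacobiWeight (k l : ℂ) (ht : t ∈ slitPlane)
    (ht' : 1 - t ∈ slitPlane) :
    shiftedEuler k (shiftedEuler l (jacobiWeight a b)) t =
      (a + l) * shiftedEuler k (jacobiWeight a b) t
        - b * shiftedEuler k (jacobiWeight (a + 1) (b - 1)) t := by
  have near : ∀ᶠ t' in 𝓝 t, t' ∈ slitPlane ∧ 1 - t' ∈ slitPlane :=
    (isOpen_slitPlane.eventually_mem ht).and <|
      (continuous_const.sub continuous_id).continuousAt.eventually
        (isOpen_slitPlane.eventually_mem ht')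
  have inner : shiftedEuler l (jacobiWeight a b) =ᶠ[𝓝 t] fun t' =>
      (a + l) * jacobiWeight a b t' - b * jacobiWeight (a + 1) (b - 1) t' :=
    near.mono fun _ h => shiftedEuler_jacobiWeight a b l h.1 h.2
  have hderiv := ((analyticAt_jacobiWeight a b ht ht').differentiableAt.hasDerivAt.const_mul
    (a + l)).fun_sub ((analyticAt_jacobiWeight (a + 1) (b - 1) ht
      ht').differentiableAt.hasDerivAt.const_mul b)
  rw [shiftedEuler_congr inner, shiftedEuler, hderiv.deriv, shiftedEuler, shiftedEuler]
  ring

end JacobiWeight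

section Eigenvalue

variable (α β γ η : ℂ)

theorem radialLaplacian_jacobiWeight (n m s : ℂ) {t : ℂ} (ht : t ∈ slitPlane)
    (ht' : 1 - t ∈ slitPlane) :
    radialLaplacian (magneticPotential (γ + 1) η) (magneticPotential (γ - α - 1) (η - β)) n m
        (jacobiWeight (-η - s) (-(γ + m + 1) + s)) t =
      ((m + 1) * (α - 2 * γ - m) - (α - γ + 1)) * jacobiWeight (-η - s) (-(γ + m + 1) + s) t
        - (s * (α - 2 * (γ + m) - 1 + s) * jacobiWeight (-η - s) (-(γ + m + 1) + s) t
          + (m - s) * (n + (β - 2 * η) - s) *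
            jacobiWeight (-η - (s + 1)) (-(γ + m + 1) + (s + 1)) t) := by
  have ht₀ : t ≠ 0 := slitPlane_ne_zero ht
  have ht₁ : 1 - t ≠ 0 := slitPlane_ne_zero ht'
  have lower : jacobiWeight (-η - (s + 1)) (-(γ + m + 1) + (s + 1)) t =
      (1 - t) / t * jacobiWeight (-η - s) (-(γ + m + 1) + s) t := by
    simpa [sub_sub, add_assoc] using
      jacobiWeight_sub_add_natCast (-η - s) (-(γ + m + 1) + s) ht₀ ht₁ 1
  rw [radialLaplacian, shiftedEuler_shiftedEuler_jacobiWeight _ _ _ _ ht ht',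
    shiftedEuler_jacobiWeight _ _ n ht ht', shiftedEuler_jacobiWeight _ _ m ht ht',
    shiftedEuler_jacobiWeight _ _ n ht ht', lower]
  simp only [jacobiWeight_add_one_sub_one _ _ ht₀ ht₁, magneticPotential]
  field_simp
  ring

theorem radialLaplacian_sum_jacobiWeight_of_recurrence (n : ℂ) {m : ℕ} {c : ℕ → ℂ}
    (hc : ∀ j < m, c (j + 1) * ((j + 1) * (α - 2 * (γ + m) - 1 + (j + 1))) =
      -((m - j) * (n + (β - 2 * η) - j) * c j))
    {t : ℂ} (ht : t ∈ slitPlane) (ht' : 1 - t ∈ slitPlane) :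
    radialLaplacian (magneticPotential (γ + 1) η) (magneticPotential (γ - α - 1) (η - β)) n m
        (fun t => ∑ j ∈ range (m + 1), c j * jacobiWeight (-η - j) (-(γ + m + 1) + j) t) t =
      ((m + 1) * (α - 2 * γ - m) - (α - γ + 1)) *
        ∑ j ∈ range (m + 1), c j * jacobiWeight (-η - j) (-(γ + m + 1) + j) t := by
  have cancel := sum_range_mul_eq_zero_of_recurrence (c := c)
    (p := fun j => j * (α - 2 * (γ + m) - 1 + j)) (q := fun j => (m - j) * (n + (β - 2 * η) - j))
    (fun j => jacobiWeight (-η - j) (-(γ + m + 1) + j) t) (by simp)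
    (mul_eq_zero_of_left (sub_self _) _) (by simpa only [Nat.cast_succ] using hc)
  simp only [Nat.cast_succ] at cancel
  rw [radialLaplacian_sum fun j _ => analyticAt_jacobiWeight _ _ ht ht']
  simp only [radialLaplacian_jacobiWeight α β γ η n m _ ht ht', mul_sub (c _), sum_sub_distrib,
    cancel, sub_zero, mul_sum, mul_left_comm (c _)]

/-- The coefficient of `(1 - z * w) ^ j * z ^ (n - j) * w ^ (m - j)` in `Z^{κ,ρ}_{m,n}`, with
complex parameters and `ν = n + ρ`. Since `Gamma` is `0` at its poles, the division encodes
`1 / Γ = 0` there; the coefficient is also `0` at the poles of the two numerator factors. -/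
noncomputable def zernikeCoeff (κ ν : ℂ) (m j : ℕ) : ℂ :=
  (-1) ^ j * (m.factorial : ℂ) * Gamma (ν + 1) * Gamma (κ + m + 1) /
    (j.factorial * (m - j).factorial * Gamma (ν - j + 1) * Gamma (κ + j + 1))

theorem zernikeCoeff_succ (κ ν : ℂ) {m j : ℕ} (hj : j < m) :
    zernikeCoeff κ ν m (j + 1) * ((j + 1) * (κ + (j + 1))) =
      -((m - j) * (ν - j) * zernikeCoeff κ ν m j) := by
  have hν := one_div_Gamma_eq_self_mul_one_div_Gamma_add_one (ν - j)
  have hκ := one_div_Gamma_eq_self_mul_one_div_Gamma_add_one (κ + (j + 1))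
  obtain ⟨d, rfl⟩ := Nat.exists_eq_add_of_lt hj
  have hd : j + d + 1 - (j + 1) = d := by omega
  have hd' : j + d + 1 - j = d + 1 := by omega
  have hν_arg : ν - (j + 1 : ℕ) + 1 = ν - j := by push_cast; ring
  rw [zernikeCoeff, zernikeCoeff, hd, hd', hν_arg, Nat.factorial_succ j, Nat.factorial_succ d]
  simp only [div_eq_mul_inv, mul_inv, add_assoc, Nat.cast_succ] at hν hκ ⊢
  rw [hν, hκ]
  have hj₁ : (j : ℂ) + 1 ≠ 0 := Nat.cast_add_one_ne_zero j
  have hd₁ : (d : ℂ) + 1 ≠ 0 := Nat.cast_add_one_ne_zero d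
  push_cast
  field_simp
  ring

/-- The function `ψ^{γ,η}_{m,n}` with complex parameters and an arbitrary integer `n`, in separated
form; `psiTwoVar_eq_separatedPsi` matches it with `psiTwoVar`. -/
noncomputable def separatedPsi (m : ℕ) (n : ℤ) (z w : ℂ) : ℂ :=
  z ^ n * w ^ (m : ℤ) * ∑ j ∈ range (m + 1),
    zernikeCoeff (α - 2 * (γ + m) - 1) (n + (β - 2 * η)) m j *
      jacobiWeight (-η - j) (-(γ + m + 1) + j) (z * w)

theorem psiTwoVar_eigen_general (m : ℕ) (n : ℤ) {z w : ℂ} (ht : z * w ∈ slitPlane)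
    (ht' : 1 - z * w ∈ slitPlane) :
    magneticLaplacian (magneticPotential (γ + 1) η) (magneticPotential (γ - α - 1) (η - β))
        (separatedPsi α β γ η m n) z w
      + (α - γ + 1) * separatedPsi α β γ η m n z w =
    (m + 1) * (α - 2 * γ - m) * separatedPsi α β γ η m n z w := by
  obtain ⟨hz, hw⟩ := mul_ne_zero_iff.mp (slitPlane_ne_zero ht)
  unfold separatedPsi
  rw [magneticLaplacian_zpow_mul_zpow_mul n m hz hw (g := fun t => ∑ j ∈ range (m + 1), _ * _)
    (analyticAt_fun_sum _ fun j _ => analyticAt_const.mul (analyticAt_jacobiWeight _ _ ht ht')),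
    Int.cast_natCast, radialLaplacian_sum_jacobiWeight_of_recurrence α β γ η n
      (fun j hj => zernikeCoeff_succ _ _ hj) ht ht']
  ring

end Eigenvalue

theorem psiTwoVar_eq_separatedPsi (α β γ η : ℝ) (m n : ℕ) {z w : ℂ} (ht : z * w ≠ 0)
    (ht' : 1 - z * w ≠ 0) :
    psiTwoVar α β γ η m n z w = separatedPsi α β γ η m n z w := by
  obtain ⟨hz, hw⟩ := mul_ne_zero_iff.mp ht
  rw [psiTwoVar, fracZernike, separatedPsi, mul_sum, mul_sum]
  refine sum_congr rfl fun j hj => ?_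
  have hjm : j ≤ m := Nat.lt_succ_iff.mp (mem_range.mp hj)
  have coeff : (-1 : ℂ) ^ j * (m.factorial : ℂ) * Gamma (n + (β - 2 * η : ℝ) + 1) *
        Gamma ((α - 2 * (γ + m) - 1 : ℝ) + m + 1) /
      (j.factorial * (m - j).factorial * Gamma (n + (β - 2 * η : ℝ) - j + 1) *
        Gamma ((α - 2 * (γ + m) - 1 : ℝ) + j + 1)) =
      zernikeCoeff (α - 2 * (γ + m) - 1) ((n : ℤ) + (β - 2 * η)) m j := by
    push_cast [zernikeCoeff]
    rfl
  rw [coeff, jacobiWeight_sub_add_natCast _ _ ht ht', jacobiWeight, zpow_sub₀ hz,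
    pow_sub₀ _ hw hjm, div_pow, mul_pow]
  simp only [zpow_natCast]
  field_simp

/-- The β-restricted Zernike functions satisfy, in the two-variable picture, the eigenvalue
equation for the perturbed magnetic Laplacian
`L^{α,β,+}_{γ,η} = Δ^{γ-α-1,η-β}_{γ+1,η} + (α-γ+1)` with eigenvalue `(m+1)(α-2γ-m)`. -/
theorem psiTwoVar_eigen (α β γ η κ ρ : ℝ) (m n : ℕ)
    (hκdef : κ = α - 2 * (γ + m) - 1) (hρdef : ρ = β - 2 * η)
    (hκ : -1 < κ) (hρ : -1 < ρ) (z w : ℂ) (hz : z ≠ 0) (hw : w ≠ 0)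
    (hzw : ¬((z * w).re ≤ 0 ∧ (z * w).im = 0))
    (h1 : ¬((1 - z * w).re ≤ 0 ∧ (1 - z * w).im = 0)) :
    -(1 - z * w) ^ 2 *
        deriv (fun z' => deriv (fun w' => psiTwoVar α β γ η m n z' w') w) z
      + (1 - z * w) *
          (Hpot (γ + 1) η (z * w) * z * deriv (fun z' => psiTwoVar α β γ η m n z' w) z
            - Hpot (γ - α - 1) (η - β) (z * w) * w *
                deriv (fun w' => psiTwoVar α β γ η m n z w') w)
      + Hpot (γ + 1) η (z * w) * Hpot (γ - α - 1) (η - β) (z * w) * (z * w) *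
          psiTwoVar α β γ η m n z w
      + ((α : ℂ) - γ + 1) * psiTwoVar α β γ η m n z w
    = ((m : ℂ) + 1) * ((α : ℂ) - 2 * γ - m) * psiTwoVar α β γ η m n z w := by
  have ht : z * w ∈ slitPlane := by
    simpa only [mem_slitPlane_iff, not_and_or, not_le] using hzw
  have ht' : 1 - z * w ∈ slitPlane := by
    simpa only [mem_slitPlane_iff, not_and_or, not_le] using h1
  have separated : ∀ᶠ p in 𝓝 (z, w), psiTwoVar α β γ η m n p.1 p.2 =
      separatedPsi α β γ η m n p.1 p.2 := by
    have hmul : ContinuousAt (fun p : ℂ × ℂ => p.1 * p.2) (z, w) := continuous_mul.continuousAt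
    filter_upwards [hmul.eventually_ne (slitPlane_ne_zero ht),
      (continuousAt_const.sub hmul).eventually_ne (slitPlane_ne_zero ht')]
      with p hp hp' using psiTwoVar_eq_separatedPsi α β γ η m n hp hp'
  have eigen := psiTwoVar_eigen_general α β γ η m n ht ht'
  rw [← magneticLaplacian_congr separated, ← separated.self_of_nhds] at eigen
  simpa only [magneticLaplacian, magneticPotential, Hpot, ofReal_add, ofReal_sub, ofReal_one,
    Int.cast_natCast] using eigen
end

section
/- Let α, β, γ, η be real numbers, w ∈ ℂ a fixed parameter, and U ⊆ {u ∈ ℂ : uw ∉ (-∞,0], 1-uw ∉ (-∞,0]} open. For real a, b set h_{a,b}(u) := (1-uw)^a (uw)^b (principal-branch powers) and, for j = 1, …, m, define the first-order operators (A*_j f)(u) := -h_{γ+j-α, η-β}(u) · d/du[h_{α-γ-j+1, β-η} · f](u). Then for every f analytic on U, every positive integer m, and every z ∈ U, the m-fold composition has the closed Rodrigues-type expression (A*_1 ∘ A*_2 ∘ ⋯ ∘ A*_m f)(z) = (-1)^m · h_{γ-α+m, η-β}(z) · D^m[h_{α-γ, β-η} · f](z), where D^m denotes the m-th complex derivative in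 u. -/
open Complex

/-- The weight function `h_{a,b}(u) = (1-uw)^a (uw)^b` (with `w` a fixed parameter playing the
role of the conjugate variable). -/
noncomputable def hpow (w : ℂ) (a b : ℝ) (u : ℂ) : ℂ := (1 - u * w) ^ (a : ℂ) * (u * w) ^ (b : ℂ)

/-- The creation-type operator `A*_j f = -h_{γ+j-α,η-β} d/du (h_{α-γ-j+1,β-η} f)`. -/
noncomputable def opAstarJ (α β γ η : ℝ) (w : ℂ) (j : ℕ) (f : ℂ → ℂ) (u : ℂ) : ℂ :=
  -hpow w (γ + j - α) (η - β) u *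
    deriv (fun u' => hpow w (α - γ - j + 1) (β - η) u' * f u') u

/-- The `m`-fold composition `A*_1 ∘ A*_2 ∘ ⋯ ∘ A*_m`. -/
noncomputable def opAstarIter (α β η : ℝ) (w : ℂ) : ℝ → ℕ → (ℂ → ℂ) → ℂ → ℂ
  | _, 0, f => f
  | γ, (k + 1), f => opAstarJ α β γ η w 1 (opAstarIter α β η w (γ + 1) k f)

/-!
Put `l u = 1 - u * w` and `D = d/du`. The weights multiply by adding exponents, so the inner weight
of `A*_j` turns `h_{γ+j-α+n, η-β} · DⁿG` into `lⁿ⁺¹ · DⁿG`. Because `l` is affine, Leibniz' rule for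
`Dⁿ⁺¹(l · G)` has only two terms, and they recombine to `D(lⁿ⁺¹ · DⁿG) = lⁿ · Dⁿ⁺¹(l · G)`. The
factor `lⁿ` is absorbed by the outer weight, and the factor `l` raises by one the exponent of the
weight inside `G = h_{α-γ-j, β-η} · f`.
-/

open scoped ContDiff Topology

/-- The set of `u` at which both `u * w` and `1 - u * w` avoid the branch cut `(-∞, 0]`, so that
the weights `hpow w a b` are analytic. -/
def hpowDomain (w : ℂ) : Set ℂ := {u | u * w ∈ slitPlane ∧ 1 - u * w ∈ slitPlane}

section AffineMultiplier

variable {𝕜 𝔸 : Type*} [NontriviallyNormedField 𝕜]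

theorem contDiff_of_hasDerivAt_const {F : Type*} [NormedAddCommGroup F] [NormedSpace 𝕜 F]
    {l : 𝕜 → F} {c : F} (hl : ∀ u, HasDerivAt l c u) : ContDiff 𝕜 ∞ l := by
  have hderiv : deriv l = fun _ => c := funext fun u => (hl u).deriv
  rw [contDiff_infty_iff_deriv, hderiv]
  exact ⟨fun u => (hl u).differentiableAt, contDiff_const⟩

theorem iteratedDeriv_succ_mul_of_hasDerivAt_const [NormedRing 𝔸] [NormedAlgebra 𝕜 𝔸]
    {l G : 𝕜 → 𝔸} {c : 𝔸} (hl : ∀ u, HasDerivAt l c u) {n : ℕ} {z : 𝕜}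
    (hG : ContDiffAt 𝕜 (n + 1) G z) :
    iteratedDeriv (n + 1) (fun u => l u * G u) z =
      l z * iteratedDeriv (n + 1) G z + (n + 1) * c * iteratedDeriv n G z := by
  have hderiv : deriv l = fun _ => c := funext fun u => (hl u).deriv
  have hhigher (i : ℕ) : iteratedDeriv (i + 2) l z = 0 := by
    rw [iteratedDeriv_succ', hderiv]
    simp [iteratedDeriv_const]
  have hsmooth := (contDiff_infty.mp (contDiff_of_hasDerivAt_const hl) (n + 1)).contDiffAt (x := z)
  rw [iteratedDeriv_fun_mul hsmooth (mod_cast hG),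
    Finset.sum_range_succ', Finset.sum_range_succ', Finset.sum_eq_zero fun i _ => by
      rw [hhigher, mul_zero, zero_mul]]
  simp [iteratedDeriv_one, hderiv, add_comm]

theorem deriv_pow_succ_mul_iteratedDeriv [NormedCommRing 𝔸] [NormedAlgebra 𝕜 𝔸]
    {l G : 𝕜 → 𝔸} {c : 𝔸} (hl : ∀ u, HasDerivAt l c u) {n : ℕ} {z : 𝕜}
    (hG : ContDiffAt 𝕜 (n + 1) G z) :
    deriv (fun u => l u ^ (n + 1) * iteratedDeriv n G u) z =
      l z ^ n * iteratedDeriv (n + 1) (fun u => l u * G u) z := by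
  have hdiff : DifferentiableAt 𝕜 (iteratedDeriv n G) z := by
    rw [← iteratedDerivWithin_univ, ← differentiableWithinAt_univ]
    exact hG.contDiffWithinAt.differentiableWithinAt_iteratedDerivWithin
      (by exact_mod_cast n.lt_succ_self) (by simp [uniqueDiffOn_univ])
  have hprod := ((hl z).fun_pow (n + 1)).fun_mul hdiff.hasDerivAt
  rw [hprod.deriv, iteratedDeriv_succ_mul_of_hasDerivAt_const hl hG, iteratedDeriv_succ]
  push_cast [Nat.add_sub_cancel]
  ring

end AffineMultiplier

section Weight

variable {w : ℂ}

theorem hpow_mul_hpow {u : ℂ} (h₀ : u * w ≠ 0) (h₁ : 1 - u * w ≠ 0) (a b c d : ℝ) :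
    hpow w a b u * hpow w c d u = hpow w (a + c) (b + d) u := by
  simp only [hpow, ofReal_add, cpow_add _ _ h₀, cpow_add _ _ h₁]
  ring

theorem hpow_natCast_zero (n : ℕ) (u : ℂ) : hpow w n 0 u = (1 - u * w) ^ n := by
  simp [hpow]

theorem hpow_mul_one_sub_mul_pow {u : ℂ} (h₁ : 1 - u * w ≠ 0) (a b : ℝ) (n : ℕ) :
    hpow w a b u * (1 - u * w) ^ n = hpow w (a + n) b u := by
  simp only [hpow, ofReal_add, ofReal_natCast, cpow_add _ _ h₁, cpow_natCast]
  ring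

theorem mul_ne_zero_of_mem_hpowDomain {u : ℂ} (hu : u ∈ hpowDomain w) : u * w ≠ 0 :=
  slitPlane_ne_zero hu.1

theorem one_sub_mul_ne_zero_of_mem_hpowDomain {u : ℂ} (hu : u ∈ hpowDomain w) : 1 - u * w ≠ 0 :=
  slitPlane_ne_zero hu.2

theorem isOpen_hpowDomain (w : ℂ) : IsOpen (hpowDomain w) :=
  (isOpen_slitPlane.preimage (by fun_prop)).inter (isOpen_slitPlane.preimage (by fun_prop))

theorem analyticAt_hpow {u : ℂ} (hu : u ∈ hpowDomain w) (a b : ℝ) :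
    AnalyticAt ℂ (hpow w a b) u :=
  ((by fun_prop : AnalyticAt ℂ (fun v => 1 - v * w) u).cpow analyticAt_const hu.2).mul
    ((by fun_prop : AnalyticAt ℂ (fun v => v * w) u).cpow analyticAt_const hu.1)

end Weight

section CreationOperator

variable (α β γ η : ℝ) {w z : ℂ}

theorem opAstarJ_congr (j : ℕ) {f g : ℂ → ℂ} (hfg : f =ᶠ[𝓝 z] g) :
    opAstarJ α β γ η w j f z = opAstarJ α β γ η w j g z :=
  congrArg (_ * ·) ((Filter.EventuallyEq.refl _ _).mul hfg).deriv_eq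

theorem opAstarJ_const_mul (j : ℕ) (c : ℂ) (f : ℂ → ℂ) :
    opAstarJ α β γ η w j (fun u => c * f u) z = c * opAstarJ α β γ η w j f z := by
  simp only [opAstarJ, mul_left_comm _ c, deriv_const_mul_field]

theorem opAstarJ_hpow_mul (hz : z ∈ hpowDomain w) (j n : ℕ) (g : ℂ → ℂ) :
    opAstarJ α β γ η w j (fun u => hpow w (γ + j - α + n) (η - β) u * g u) z =
      -hpow w (γ + j - α) (η - β) z * deriv (fun u => (1 - u * w) ^ (n + 1) * g u) z := by
  have hweight : (fun u => hpow w (α - γ - j + 1) (β - η) u *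
      (hpow w (γ + j - α + n) (η - β) u * g u)) =ᶠ[𝓝 z]
      fun u => (1 - u * w) ^ (n + 1) * g u := by
    filter_upwards [(isOpen_hpowDomain w).mem_nhds hz] with u hu
    rw [← mul_assoc, hpow_mul_hpow (mul_ne_zero_of_mem_hpowDomain hu)
      (one_sub_mul_ne_zero_of_mem_hpowDomain hu), ← hpow_natCast_zero]
    congr 2 <;> push_cast <;> ring
  rw [opAstarJ, hweight.deriv_eq]

theorem opAstarJ_hpow_mul_iteratedDeriv (hz : z ∈ hpowDomain w) (j n : ℕ) {G : ℂ → ℂ}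
    (hG : ContDiffAt ℂ (n + 1) G z) :
    opAstarJ α β γ η w j
        (fun u => hpow w (γ + j - α + n) (η - β) u * iteratedDeriv n G u) z =
      -hpow w (γ + j - α + n) (η - β) z *
        iteratedDeriv (n + 1) (fun u => (1 - u * w) * G u) z := by
  have haffine (u : ℂ) : HasDerivAt (fun v => 1 - v * w) (-w) u := by
    simpa using ((hasDerivAt_id u).mul_const w).const_sub 1
  rw [opAstarJ_hpow_mul α β γ η hz, deriv_pow_succ_mul_iteratedDeriv haffine hG, ← mul_assoc,
    neg_mul, hpow_mul_one_sub_mul_pow (one_sub_mul_ne_zero_of_mem_hpowDomain hz)]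

theorem opAstarJ_rodrigues (hz : z ∈ hpowDomain w) (j n : ℕ) {f : ℂ → ℂ}
    (hf : AnalyticAt ℂ f z) :
    opAstarJ α β γ η w j (fun u => (-1) ^ n * hpow w (γ + j - α + n) (η - β) u *
        iteratedDeriv n (fun v => hpow w (α - (γ + j)) (β - η) v * f v) u) z =
      (-1) ^ (n + 1) * hpow w (γ + j - α + n) (η - β) z *
        iteratedDeriv (n + 1) (fun u => hpow w (α - (γ + j) + 1) (β - η) u * f u) z := by
  have hraise : (fun u => (1 - u * w) * (hpow w (α - (γ + j)) (β - η) u * f u)) =ᶠ[𝓝 z]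
      fun u => hpow w (α - (γ + j) + 1) (β - η) u * f u := by
    filter_upwards [(isOpen_hpowDomain w).mem_nhds hz] with u hu
    have h := hpow_mul_one_sub_mul_pow (one_sub_mul_ne_zero_of_mem_hpowDomain hu)
      (α - (γ + j)) (β - η) 1
    rw [Nat.cast_one, pow_one] at h
    rw [← h]
    ring
  have hG : AnalyticAt ℂ (fun u => hpow w (α - (γ + j)) (β - η) u * f u) z :=
    (analyticAt_hpow hz _ _).mul hf
  simp only [mul_assoc]
  rw [opAstarJ_const_mul, opAstarJ_hpow_mul_iteratedDeriv α β γ η hz j n hG.contDiffAt,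
    hraise.iteratedDeriv_eq]
  ring

end CreationOperator

/-- Closed Rodrigues-type expression for the `m`-fold composition `A*_1 ∘ ⋯ ∘ A*_m`. -/
theorem opAstarIter_rodrigues (α β γ η : ℝ) (w : ℂ) (U : Set ℂ) (hU : IsOpen U)
    (hUsub : U ⊆ {u : ℂ | ¬((u * w).re ≤ 0 ∧ (u * w).im = 0) ∧
      ¬((1 - u * w).re ≤ 0 ∧ (1 - u * w).im = 0)})
    (f : ℂ → ℂ) (hf : AnalyticOnNhd ℂ f U) (m : ℕ) (hm : 0 < m) (z : ℂ) (hz : z ∈ U) :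
    opAstarIter α β η w γ m f z
      = (-1 : ℂ) ^ m * hpow w (γ - α + m) (η - β) z *
          iteratedDeriv m (fun u => hpow w (α - γ) (β - η) u * f u) z := by
  have hdom : U ⊆ hpowDomain w := fun u hu => by
    simpa only [hpowDomain, mem_slitPlane_iff, Set.mem_ofPred_eq, not_and_or, not_le] using hUsub hu
  clear hm
  induction m generalizing γ z with
  | zero =>
    have hcancel : hpow w (γ - α) (η - β) z * hpow w (α - γ) (β - η) z = 1 := by
      rw [hpow_mul_hpow (mul_ne_zero_of_mem_hpowDomain (hdom hz))
        (one_sub_mul_ne_zero_of_mem_hpowDomain (hdom hz))]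
      simp [hpow]
    simp [opAstarIter, ← mul_assoc, hcancel]
  | succ k ih =>
    have hinner := Filter.eventuallyEq_of_mem (hU.mem_nhds hz) fun u hu => ih (γ + 1) u hu
    have hstep := opAstarJ_rodrigues α β γ η (hdom hz) 1 k (hf z hz)
    rw [Nat.cast_one, show α - (γ + 1) + 1 = α - γ by ring] at hstep
    rw [show γ - α + (k + 1 : ℕ) = γ + 1 - α + k by push_cast; ring]
    exact (opAstarJ_congr α β γ η 1 hinner).trans hstep
end

section
/- Let κ > -1 and ρ > -1 be real and let m ≥ 1 and n ≥ 1 be integers. Then for every z ∈ ℂ with z ≠ 0 and every w ∈ ℂ, the fractional Zernike functions satisfy the recurrence Z^{κ,ρ}_{m,n}(z,w) = (κ+m)·w·Z^{κ,ρ}_{m-1,n}(z,w) - (n+ρ)·(1-zw)·Z^{κ+1,ρ}_{m-1,n-1}(z,w). -/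
/-!
Up to the factor `z ^ n`, the fractional Zernike function is a homogenized Jacobi polynomial in
`(1 - z * w) / z` and `w`, because its quotients of Gamma values are rising and falling factorials.
For that polynomial the recurrence is Pascal's rule: raising the exponent of `w` extends the rising
factorial by its last factor, and raising the other exponent extends the falling factorial by its
first one.
-/

open Complex Finset

/-- The homogenized Jacobi polynomial: `m!` times the Jacobi polynomial `P_m^{(κ, b - m)}(t)`, with
`(1 - t) / 2` and `(1 + t) / 2` replaced by independent variables `x` and `y`. Its coefficients are
written with falling and rising factorials, so that it makes sense over every commutative ring. -/
noncomputable def homogeneousJacobi {R : Type*} [CommRing R] (κ b : R) (m : ℕ) (x y : R) : R :=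
  ∑ p ∈ antidiagonal m, (m.choose p.1 : R) *
    ((-1) ^ p.1 * (descPochhammer R p.1).eval b * (ascPochhammer R p.2).eval (κ + p.1 + 1) *
      x ^ p.1 * y ^ p.2)

theorem descPochhammer_succ_eval_left {R : Type*} [CommRing R] (n : ℕ) (r : R) :
    (descPochhammer R (n + 1)).eval r = r * (descPochhammer R n).eval (r - 1) := by
  simp [descPochhammer_succ_left, Polynomial.eval_comp]

theorem ascPochhammer_succ_eval_left {R : Type*} [CommSemiring R] (n : ℕ) (r : R) :
    (ascPochhammer R (n + 1)).eval r = r * (ascPochhammer R n).eval (r + 1) := by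
  simp [ascPochhammer_succ_left, Polynomial.eval_comp]

theorem homogeneousJacobi_succ {R : Type*} [CommRing R] (κ b : R) (m : ℕ) (x y : R) :
    homogeneousJacobi κ b (m + 1) x y =
      (κ + m + 1) * y * homogeneousJacobi κ b m x y -
        b * x * homogeneousJacobi (κ + 1) (b - 1) m x y := by
  simp only [homogeneousJacobi]
  rw [sum_antidiagonal_choose_succ_mul (fun i j ↦ (-1) ^ i * (descPochhammer R i).eval b *
    (ascPochhammer R j).eval (κ + i + 1) * x ^ i * y ^ j), sub_eq_add_neg, mul_sum, mul_sum,
    ← sum_neg_distrib]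
  congr 1 <;> refine sum_congr rfl fun ⟨i, j⟩ hij ↦ ?_
  · obtain rfl : i + j = m := mem_antidiagonal.mp hij
    rw [ascPochhammer_succ_eval]
    push_cast
    ring
  · have shift : κ + (i + 1 : ℕ) + 1 = κ + 1 + i + 1 := by push_cast; ring
    rw [descPochhammer_succ_eval_left, shift,
      ← Nat.choose_symm_of_eq_add (mem_antidiagonal.mp hij).symm]
    ring

-- Unlike in `Complex.Gamma_add_nat_div_Gamma_eq`, `s` may be a pole of `Gamma`: there
-- `Gamma s = 0`, so the quotient is `0`, and so is the rising factorial.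
theorem Gamma_add_natCast_div_Gamma (s : ℂ) (n : ℕ) (hs : ∀ k : ℕ, s + n ≠ -k) :
    Gamma (s + n) / Gamma s = (ascPochhammer ℂ n).eval s := by
  induction n generalizing s with
  | zero => simpa using div_self (Gamma_ne_zero (by simpa using hs))
  | succ n ih =>
    have shift : s + (n + 1 : ℕ) = s + 1 + n := by push_cast; ring
    rw [shift] at hs ⊢
    rw [ascPochhammer_succ_eval_left, ← ih (s + 1) hs, div_eq_mul_inv,
      one_div_Gamma_eq_self_mul_one_div_Gamma_add_one]
    ring

theorem Gamma_add_one_div_Gamma_sub_natCast_add_one (s : ℂ) (n : ℕ) (hs : ∀ k : ℕ, s + 1 ≠ -k) :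
    Gamma (s + 1) / Gamma (s - n + 1) = (descPochhammer ℂ n).eval s := by
  have shift : s - n + 1 + n = s + 1 := by ring
  rw [descPochhammer_eval_eq_ascPochhammer,
    ← Gamma_add_natCast_div_Gamma _ _ (by simpa only [shift] using hs), shift]

theorem fracZernike_eq_homogeneousJacobi (κ ρ : ℝ) (m n : ℕ) (hκ : ∀ k : ℕ, κ + m + 1 ≠ -k)
    (hρ : ∀ k : ℕ, n + ρ + 1 ≠ -k) (z : ℂ) (hz : z ≠ 0) (w : ℂ) :
    fracZernike κ ρ m n z w =
      z ^ n * homogeneousJacobi (κ : ℂ) (n + ρ) m ((1 - z * w) / z) w := by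
  rw [fracZernike, homogeneousJacobi, Nat.sum_antidiagonal_eq_sum_range_succ_mk, mul_sum]
  refine sum_congr rfl fun j hj ↦ ?_
  have hjm : j ≤ m := Nat.lt_succ_iff.mp (mem_range.mp hj)
  have falling := Gamma_add_one_div_Gamma_sub_natCast_add_one (n + ρ) j
    (fun k ↦ by exact_mod_cast hρ k)
  have shift : (κ : ℂ) + j + 1 + (m - j : ℕ) = κ + m + 1 := by
    push_cast [hjm]
    ring
  have rising := Gamma_add_natCast_div_Gamma (κ + j + 1) (m - j)
    (fun k ↦ by rw [shift]; exact_mod_cast hκ k)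
  rw [shift] at rising
  rw [← falling, ← rising, Nat.cast_choose ℂ hjm, zpow_sub₀ hz, zpow_natCast, zpow_natCast, div_pow]
  ring

theorem add_natCast_ne_neg_natCast {R : Type*} [CommRing R] [LinearOrder R]
    [IsStrictOrderedRing R] {a : R} (ha : -1 < a) {n : ℕ} (hn : 1 ≤ n) (k : ℕ) :
    a + n ≠ -k := by
  have one_le : (1 : R) ≤ n := Nat.one_le_cast.mpr hn
  linarith

theorem fracZernike_recurrence_general (κ ρ : ℝ) (m n : ℕ) (hκ : ∀ k : ℕ, κ + m ≠ -k)
    (hρ : ∀ k : ℕ, n + ρ ≠ -k) (hm : 1 ≤ m) (hn : 1 ≤ n) (z : ℂ) (hz : z ≠ 0) (w : ℂ) :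
    fracZernike κ ρ m n z w
      = ((κ : ℂ) + m) * w * fracZernike κ ρ (m - 1) n z w
        - ((n : ℂ) + ρ) * (1 - z * w) * fracZernike (κ + 1) ρ (m - 1) (n - 1) z w := by
  obtain ⟨m, rfl⟩ := Nat.exists_eq_add_of_le' hm
  obtain ⟨n, rfl⟩ := Nat.exists_eq_add_of_le' hn
  have hκ' (k : ℕ) : κ + (m + 1 : ℕ) + 1 ≠ -k := fun h ↦
    hκ (k + 1) (by push_cast at h ⊢; linarith)
  have hρ' (k : ℕ) : (n + 1 : ℕ) + ρ + 1 ≠ -k := fun h ↦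
    hρ (k + 1) (by push_cast at h ⊢; linarith)
  have shift : (n : ℂ) + ρ = (n + 1 : ℕ) + ρ - 1 := by push_cast; ring
  simp only [Nat.add_sub_cancel]
  rw [fracZernike_eq_homogeneousJacobi κ ρ (m + 1) (n + 1) hκ' hρ' z hz,
    fracZernike_eq_homogeneousJacobi κ ρ m (n + 1)
      (by simpa only [Nat.cast_succ, add_assoc] using hκ) hρ' z hz,
    fracZernike_eq_homogeneousJacobi (κ + 1) ρ m n
      (by simpa only [Nat.cast_succ, add_assoc, add_comm, add_left_comm] using hκ')
      (by simpa only [Nat.cast_succ, add_right_comm] using hρ) z hz,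
    homogeneousJacobi_succ, ofReal_add, ofReal_one, shift]
  push_cast
  field_simp
  ring

/-- Recurrence formula for the fractional Zernike functions. -/
theorem fracZernike_recurrence (κ ρ : ℝ) (hκ : -1 < κ) (hρ : -1 < ρ) (m n : ℕ)
    (hm : 1 ≤ m) (hn : 1 ≤ n) (z : ℂ) (hz : z ≠ 0) (w : ℂ) :
    fracZernike κ ρ m n z w
      = ((κ : ℂ) + m) * w * fracZernike κ ρ (m - 1) n z w
        - ((n : ℂ) + ρ) * (1 - z * w) * fracZernike (κ + 1) ρ (m - 1) (n - 1) z w := by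
  exact fracZernike_recurrence_general κ ρ m n (add_natCast_ne_neg_natCast hκ hm)
    (fun k ↦ by rw [add_comm]; exact add_natCast_ne_neg_natCast hρ hn k) hm hn z hz w
end
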